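/- arXiv:1510.06435 — 4 statements merged into one kernel-verified Lean document; each statement's English description precedes it below -/
import Mathlib

section
/- Let α, β₁, β₂, γ₁, γ₂ be complex numbers such that γ₁ and γ₂ are not nonpositive integers, and let A, B be real numbers with A > B > 2. Then A^{−α} · F₂(α; β₁, β₂; γ₁, γ₂; 1/A, 1 − B/A) = (A−1)^{−α} · F₂(α; γ₁−β₁, β₂; γ₁, γ₂; 1/(1−A), 1 − (1−B)/(1−A)), where A^{−α} and (A−1)^{−α} are principal branch powers of the positive reals A and A−1. (The hypotheses guarantee (1+A−B)/A < 1 and (1+A−B)/(A−1) < 1, so both F₂ series converge absolutely.) -/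
open Complex

/-- Pochhammer symbol `(x)_n` in `ℂ`. -/
noncomputable def cpoch (x : ℂ) (n : ℕ) : ℂ := (ascPochhammer ℂ n).eval x

/-- Appell's hypergeometric series `F₂`. -/
noncomputable def appellF2 (a b₁ b₂ c₁ c₂ z₁ z₂ : ℂ) : ℂ :=
  ∑' p : ℕ × ℕ, cpoch a (p.1 + p.2) * cpoch b₁ p.1 * cpoch b₂ p.2 /
    (cpoch c₁ p.1 * cpoch c₂ p.2 * (p.1.factorial : ℂ) * (p.2.factorial : ℂ)) *
    z₁ ^ p.1 * z₂ ^ p.2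

/-!
Everything reduces to Pfaff's transformation `₂F₁ a b c x = (1-x)^(-a) ₂F₁ a (c-b) c (x/(x-1))`.
Summing `F₂(α; β₁, β₂; γ₁, γ₂; x, y)` over its first index gives a power series in `y` whose `n`-th
coefficient is a multiple of `₂F₁ (α+n) β₁ γ₁ x`; Pfaff's transformation of each coefficient
produces the factor `(1-x)^(-α-n)`, which turns `y` into `y/(1-x)`. With `x = 1/A` and `y = 1 - B/A`
this is the claimed identity, because `1 - x = (A-1)/A`.

Pfaff's transformation itself comes from summing `F₂(a; c-b, 1; c, 1; -x, x)` in two ways: row by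
row with the binomial series, and along antidiagonals with the Chu–Vandermonde identity. The double
series converges only for `‖x‖ < 1/2`; analytic continuation does the rest.
-/

open Finset Filter Topology
open scoped Nat

section Pochhammer

lemma cpoch_one (n : ℕ) : cpoch 1 n = n ! := ascPochhammer_eval_one ℂ n

lemma cpoch_add (x : ℂ) (m n : ℕ) : cpoch x (m + n) = cpoch x m * cpoch (x + m) n := by
  simp [cpoch, ← ascPochhammer_mul, Polynomial.eval_comp]

lemma cpoch_ne_zero {x : ℂ} (hx : ∀ n : ℕ, x ≠ -(n : ℂ)) (n : ℕ) : cpoch x n ≠ 0 := by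
  rw [cpoch, Ne, ascPochhammer_eval_eq_zero_iff]
  rintro ⟨k, -, hk⟩
  exact hx k (by rw [hk, neg_neg])

lemma sum_antidiagonal_choose_mul_ascPochhammer {R : Type*} [CommRing R] (b c : R) (n : ℕ) :
    ∑ ij ∈ antidiagonal n, (n.choose ij.1 : R) * ((-1) ^ ij.1 *
      (ascPochhammer R ij.1).eval b * (ascPochhammer R ij.2).eval (c + ij.1)) =
    (ascPochhammer R n).eval (c - b) := by
  have vandermonde := Ring.descPochhammer_smeval_add n (Commute.all (-b) (c + n - 1))
  simp only [Polynomial.descPochhammer_smeval_eq_ascPochhammer,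
    Polynomial.ascPochhammer_smeval_eq_eval] at vandermonde
  rw [show -b + (c + n - 1) - n + 1 = c - b by ring] at vandermonde
  rw [vandermonde]
  refine sum_congr rfl fun ij hij => ?_
  have hn : (n : R) = ij.1 + ij.2 := by rw [← mem_antidiagonal.1 hij, Nat.cast_add]
  have reflect : (-1) ^ ij.1 * (ascPochhammer R ij.1).eval b =
      (ascPochhammer R ij.1).eval (-b - ij.1 + 1) := by
    rw [← descPochhammer_eval_eq_ascPochhammer, ← neg_neg b,
      ascPochhammer_eval_neg_eq_descPochhammer, neg_neg, ← mul_assoc, ← mul_pow]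
    simp
  rw [reflect, show c + n - 1 - ij.2 + 1 = c + ij.1 by rw [hn]; ring]

end Pochhammer

section Summation

lemma tsum_eq_tsum_sum_antidiagonal {E : Type*} [NormedAddCommGroup E] [CompleteSpace E]
    {f : ℕ × ℕ → E} (hf : Summable f) : ∑' p, f p = ∑' n, ∑ p ∈ antidiagonal n, f p :=
  let e := HasAntidiagonal.sigmaAntidiagonalEquivProd (A := ℕ)
  calc
    ∑' p, f p = ∑' q, f (e q) := (e.tsum_eq f).symm
    _ = ∑' n : ℕ, ∑' p : antidiagonal n, f p := (e.summable_iff.2 hf).tsum_sigma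
    _ = _ := tsum_congr fun n => Finset.tsum_subtype' (antidiagonal n) f

lemma summable_choose_mul_pow_mul_pow {u v : ℝ} (hu : 0 ≤ u) (hv : 0 ≤ v) (huv : u + v < 1) :
    Summable fun p : ℕ × ℕ => ((p.1 + p.2).choose p.1 : ℝ) * u ^ p.1 * v ^ p.2 := by
  have row (m : ℕ) : HasSum (fun n : ℕ => ((m + n).choose m : ℝ) * u ^ m * v ^ n)
      ((1 - v)⁻¹ * (u / (1 - v)) ^ m) := by
    have hv1 : ‖v‖ < 1 := by rw [Real.norm_of_nonneg hv]; linarith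
    convert! (hasSum_choose_mul_geometric_of_norm_lt_one m hv1).mul_left (u ^ m) using 1
    · funext n
      rw [add_comm m n]
      ring
    · rw [div_pow, pow_succ]
      field_simp
  refine (summable_prod_of_nonneg fun p => by positivity).2 ⟨fun m => (row m).summable, ?_⟩
  simp only [fun m => (row m).tsum_eq]
  refine (summable_geometric_of_lt_one (div_nonneg hu (by linarith)) ?_).mul_left _
  rw [div_lt_one (by linarith)]
  linarith

end Summation

section ComplexPower

lemma cpow_neg_add_natCast {z : ℂ} (hz : z ≠ 0) (s : ℂ) (n : ℕ) :
    z ^ (-(s + n)) = z ^ (-s) / z ^ n := by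
  rw [neg_add, ← sub_eq_add_neg, cpow_sub _ _ hz, cpow_natCast]

lemma div_cpow_of_arg_sub_arg_mem_Ioc {z w : ℂ} (hz : z ≠ 0) (hw : w ≠ 0)
    (h : arg z - arg w ∈ Set.Ioc (-Real.pi) Real.pi) (s : ℂ) : (z / w) ^ s = z ^ s / w ^ s := by
  have hlog : log (z / w) = log z - log w := by
    conv_lhs => rw [← exp_log hz, ← exp_log hw, ← exp_sub]
    exact log_exp (by simpa [log_im] using h.1) (by simpa [log_im] using h.2)
  rw [cpow_def_of_ne_zero (div_ne_zero hz hw), cpow_def_of_ne_zero hz, cpow_def_of_ne_zero hw,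
    hlog, sub_mul, exp_sub]

lemma arg_sub_arg_mem_Ioc {z w : ℂ} (him : z.im = w.im) (hre : z.re ≤ w.re) :
    arg z - arg w ∈ Set.Ioc (-Real.pi) Real.pi := by
  have hz := arg_mem_Ioc z
  have hw := arg_mem_Ioc w
  rcases lt_or_ge w.im 0 with hneg | hnonneg
  · have := arg_neg_iff.2 (him ▸ hneg)
    have := arg_neg_iff.2 hneg
    constructor <;> linarith [hz.1, hw.1]
  · have hz0 := arg_nonneg_iff.2 (him ▸ hnonneg)
    have hw0 := arg_nonneg_iff.2 hnonneg
    refine ⟨lt_of_le_of_ne (by linarith [hw.2]) fun h => ?_, by linarith [hz.2]⟩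
    have hwpi := arg_eq_pi_iff.1 (show arg w = Real.pi by linarith [hw.2])
    have hzzero := arg_eq_zero_iff.1 (show arg z = 0 by linarith [hw.2])
    linarith [hwpi.1, hzzero.1]

lemma one_sub_inv_cpow {z : ℂ} (hz0 : z ≠ 0) (hz1 : z ≠ 1) (s : ℂ) :
    (1 - 1 / z) ^ s = (z - 1) ^ s / z ^ s := by
  rw [one_sub_div hz0]
  exact div_cpow_of_arg_sub_arg_mem_Ioc (sub_ne_zero.2 hz1) hz0
    (arg_sub_arg_mem_Ioc (by simp) (by simp)) s

end ComplexPower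

section GaussHypergeometric

lemma one_le_radius_ordinaryHypergeometricSeries {𝕂 : Type*} (𝔸 : Type*) [RCLike 𝕂]
    [NormedDivisionRing 𝔸] [NormedAlgebra 𝕂 𝔸] (a b c : 𝕂) :
    1 ≤ (ordinaryHypergeometricSeries 𝔸 a b c).radius := by
  by_cases h : ∀ k : ℕ, ↑k ≠ -a ∧ ↑k ≠ -b ∧ ↑k ≠ -c
  · exact (ordinaryHypergeometricSeries_radius_eq_one 𝔸 a b c h).ge
  · obtain ⟨k, hk⟩ := not_forall.1 h
    obtain rfl | rfl | rfl : a = -(k : 𝕂) ∨ b = -(k : 𝕂) ∨ c = -(k : 𝕂) := by grind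
    · simp [ordinaryHypergeometric_radius_top_of_neg_nat₁]
    · simp [ordinaryHypergeometric_radius_top_of_neg_nat₂]
    · simp [ordinaryHypergeometric_radius_top_of_neg_nat₃]

lemma analyticOnNhd_ordinaryHypergeometric {𝕂 𝔸 : Type*} [RCLike 𝕂] [NormedDivisionRing 𝔸]
    [NormedAlgebra 𝕂 𝔸] [CompleteSpace 𝔸] (a b c : 𝕂) :
    AnalyticOnNhd 𝕂 (₂F₁ a b c : 𝔸 → 𝔸) (Metric.ball 0 1) := by
  have hr := one_le_radius_ordinaryHypergeometricSeries 𝔸 a b c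
  have h := (FormalMultilinearSeries.hasFPowerSeriesOnBall _
    (zero_lt_one.trans_le hr)).analyticOnNhd
  refine h.mono fun x hx => Metric.eball_subset_eball hr ?_
  rwa [← ENNReal.ofReal_one, Metric.eball_ofReal]

lemma ordinaryHypergeometric_eq_tsum_cpoch (a b c x : ℂ) :
    ₂F₁ a b c x = ∑' n : ℕ, cpoch a n * cpoch b n / (cpoch c n * n !) * x ^ n := by
  rw [ordinaryHypergeometric_eq_tsum]
  refine tsum_congr fun n => ?_
  simp only [cpoch, smul_eq_mul]
  ring

lemma ordinaryHypergeometric_self_right (a : ℂ) {b x : ℂ} (hb : ∀ n : ℕ, b ≠ -(n : ℂ))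
    (hx : ‖x‖ < 1) : ₂F₁ a b b x = (1 - x) ^ (-a) := by
  have hx' : -x ∈ Metric.eball (0 : ℂ) 1 := by
    rwa [← ENNReal.ofReal_one, Metric.eball_ofReal, mem_ball_zero_iff, norm_neg]
  have h := (one_add_cpow_hasFPowerSeriesOnBall_zero (a := -a)).sum hx'
  rw [binomialSeries_eq_ordinaryHypergeometricSeries (b := b)
    fun k hk => hb k (by rw [hk, neg_neg]), neg_neg, zero_add, ← sub_eq_add_neg] at h
  rw [h]
  refine tsum_congr fun n => ?_
  rw [FormalMultilinearSeries.compContinuousLinearMap_apply]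
  congr 1
  funext
  simp

lemma exists_norm_cpoch_div_cpoch_le (b c : ℂ) {r : ℝ} (hr : 1 < r) :
    ∃ C : ℝ, 0 ≤ C ∧ ∀ n, ‖cpoch b n / cpoch c n‖ ≤ C * r ^ n := by
  have : 0 < r := zero_lt_one.trans hr
  have hradius : (Real.toNNReal r⁻¹ : ENNReal) <
      (ordinaryHypergeometricSeries ℂ 1 b c).radius := by
    refine lt_of_lt_of_le ?_ (one_le_radius_ordinaryHypergeometricSeries ℂ 1 b c)
    rw [ENNReal.coe_lt_one_iff, Real.toNNReal_lt_one]
    exact inv_lt_one_of_one_lt₀ hr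
  obtain ⟨C, hC, h⟩ := FormalMultilinearSeries.norm_mul_pow_le_of_lt_radius _ hradius
  refine ⟨C, hC.le, fun n => ?_⟩
  have hcoeff : ‖ordinaryHypergeometricSeries ℂ 1 b c n‖ = ‖cpoch b n / cpoch c n‖ := by
    rw [ordinaryHypergeometricSeries, FormalMultilinearSeries.ofScalars_norm,
      ordinaryHypergeometricCoefficient, ascPochhammer_eval_one,
      inv_mul_cancel₀ (Nat.cast_ne_zero.2 n.factorial_ne_zero), one_mul, ← div_eq_mul_inv]
    rfl
  have hn := h n
  rwa [hcoeff, Real.coe_toNNReal _ (by positivity), inv_pow, ← div_eq_mul_inv,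
    div_le_iff₀ (by positivity)] at hn

end GaussHypergeometric

section AppellF2

variable {x y : ℂ}

lemma summable_appellF2 (a b₁ b₂ c₁ c₂ : ℂ) (hxy : ‖x‖ + ‖y‖ < 1) :
    Summable fun p : ℕ × ℕ => cpoch a (p.1 + p.2) * cpoch b₁ p.1 * cpoch b₂ p.2 /
      (cpoch c₁ p.1 * cpoch c₂ p.2 * (p.1 ! : ℂ) * (p.2 ! : ℂ)) * x ^ p.1 * y ^ p.2 := by
  obtain ⟨r, hr, hrxy⟩ : ∃ r : ℝ, 1 < r ∧ r ^ 2 * (‖x‖ + ‖y‖) < 1 := by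
    have hcont : ContinuousAt (fun r : ℝ => r ^ 2 * (‖x‖ + ‖y‖)) 1 := by fun_prop
    have hlt := hcont.eventually_lt_const (by simpa using hxy)
    have hgt : ∀ᶠ r : ℝ in 𝓝[>] 1, 1 < r := self_mem_nhdsWithin
    exact (hgt.and (hlt.filter_mono nhdsWithin_le_nhds)).exists
  obtain ⟨C₀, hC₀, h₀⟩ := exists_norm_cpoch_div_cpoch_le a 1 hr
  obtain ⟨C₁, hC₁, h₁⟩ := exists_norm_cpoch_div_cpoch_le b₁ c₁ hr
  obtain ⟨C₂, -, h₂⟩ := exists_norm_cpoch_div_cpoch_le b₂ c₂ hr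
  have hmajorant := (summable_choose_mul_pow_mul_pow (u := r ^ 2 * ‖x‖) (v := r ^ 2 * ‖y‖)
    (by positivity) (by positivity) (by linarith)).mul_left (C₀ * C₁ * C₂)
  refine hmajorant.of_norm_bounded fun ⟨m, n⟩ => ?_
  have hfact (k : ℕ) : (k ! : ℂ) ≠ 0 := Nat.cast_ne_zero.2 k.factorial_ne_zero
  calc
    _ = ‖cpoch a (m + n) / cpoch 1 (m + n) * (cpoch b₁ m / cpoch c₁ m) *
          (cpoch b₂ n / cpoch c₂ n) * ((m + n).choose m * x ^ m * y ^ n)‖ := by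
      rw [cpoch_one, Nat.cast_add_choose]
      congr 1
      field_simp [hfact]
    _ = ‖cpoch a (m + n) / cpoch 1 (m + n)‖ * ‖cpoch b₁ m / cpoch c₁ m‖ *
          ‖cpoch b₂ n / cpoch c₂ n‖ * ((m + n).choose m * ‖x‖ ^ m * ‖y‖ ^ n) := by
      simp only [norm_mul, norm_pow, Complex.norm_natCast]
    _ ≤ C₀ * r ^ (m + n) * (C₁ * r ^ m) * (C₂ * r ^ n) *
          ((m + n).choose m * ‖x‖ ^ m * ‖y‖ ^ n) := by
      gcongr
      exacts [h₀ _, h₁ _, h₂ _]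
    _ = _ := by ring

lemma appellF2_swap (a b₁ b₂ c₁ c₂ x y : ℂ) :
    appellF2 a b₁ b₂ c₁ c₂ x y = appellF2 a b₂ b₁ c₂ c₁ y x := by
  unfold appellF2
  rw [← (Equiv.prodComm ℕ ℕ).tsum_eq]
  refine tsum_congr fun p => ?_
  simp only [Equiv.prodComm_apply, Prod.fst_swap, Prod.snd_swap, add_comm p.2]
  ring

lemma appellF2_eq_tsum_ordinaryHypergeometric (a b₁ b₂ c₁ c₂ : ℂ) (hxy : ‖x‖ + ‖y‖ < 1) :
    appellF2 a b₁ b₂ c₁ c₂ x y =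
      ∑' m : ℕ, cpoch a m * cpoch b₁ m / (cpoch c₁ m * m !) * x ^ m * ₂F₁ (a + m) b₂ c₂ y := by
  rw [appellF2, (summable_appellF2 a b₁ b₂ c₁ c₂ hxy).tsum_prod]
  refine tsum_congr fun m => ?_
  rw [ordinaryHypergeometric_eq_tsum_cpoch, ← tsum_mul_left]
  refine tsum_congr fun n => ?_
  rw [cpoch_add]
  ring

lemma appellF2_self_right (a b c : ℂ) {d : ℂ} (hd : ∀ n : ℕ, d ≠ -(n : ℂ))
    (hxy : ‖x‖ + ‖y‖ < 1) :
    appellF2 a b d c d x y = (1 - y) ^ (-a) * ₂F₁ a b c (x / (1 - y)) := by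
  have hy : ‖y‖ < 1 := by linarith [norm_nonneg x]
  have hy1 : 1 - y ≠ 0 := by
    intro h
    simp [← sub_eq_zero.1 h] at hy
  rw [appellF2_eq_tsum_ordinaryHypergeometric a b d c d hxy,
    ordinaryHypergeometric_eq_tsum_cpoch, ← tsum_mul_left]
  refine tsum_congr fun m => ?_
  rw [ordinaryHypergeometric_self_right _ hd hy, cpow_neg_add_natCast hy1, div_pow]
  ring

lemma appellF2_neg_self (a b : ℂ) {c : ℂ} (hc : ∀ n : ℕ, c ≠ -(n : ℂ)) (hx : ‖x‖ < 1 / 2) :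
    appellF2 a (c - b) 1 c 1 (-x) x = ₂F₁ a b c x := by
  rw [appellF2, tsum_eq_tsum_sum_antidiagonal
    (summable_appellF2 a (c - b) 1 c 1 (by rw [norm_neg]; linarith)),
    ordinaryHypergeometric_eq_tsum_cpoch]
  refine tsum_congr fun n => ?_
  have chu_vandermonde := sum_antidiagonal_choose_mul_ascPochhammer (c - b) c n
  rw [sub_sub_cancel] at chu_vandermonde
  rw [show cpoch b n = _ from chu_vandermonde.symm, mul_sum, sum_div, sum_mul]
  refine sum_congr rfl fun ⟨i, j⟩ hij => ?_
  obtain rfl : i + j = n := mem_antidiagonal.1 hij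
  have hfact (k : ℕ) : (k ! : ℂ) ≠ 0 := Nat.cast_ne_zero.2 k.factorial_ne_zero
  have hci := cpoch_ne_zero hc i
  have hcij : cpoch (c + i) j ≠ 0 := right_ne_zero_of_mul (cpoch_add c i j ▸ cpoch_ne_zero hc _)
  simp only [← cpoch.eq_def]
  rw [cpoch_one, cpoch_add c, Nat.cast_add_choose, neg_pow, pow_add]
  field_simp [hfact]

end AppellF2

section Pfaff

variable {c x y : ℂ}

lemma ordinaryHypergeometric_pfaff_of_norm_lt_half (a b : ℂ) (hc : ∀ n : ℕ, c ≠ -(n : ℂ))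
    (hx : ‖x‖ < 1 / 2) : ₂F₁ a b c x = (1 - x) ^ (-a) * ₂F₁ a (c - b) c (x / (x - 1)) := by
  have h1 (n : ℕ) : (1 : ℂ) ≠ -(n : ℂ) := by
    rw [Ne, eq_neg_iff_add_eq_zero]
    norm_cast
    lia
  rw [← appellF2_neg_self a b hc hx,
    appellF2_self_right a (c - b) c h1 (by rw [norm_neg]; linarith),
    ← neg_sub x 1, neg_div_neg_eq]

lemma norm_lt_norm_one_sub_iff : ‖x‖ < ‖1 - x‖ ↔ x.re < 1 / 2 := by
  rw [← sq_lt_sq₀ (norm_nonneg _) (norm_nonneg _), ← normSq_eq_norm_sq, ← normSq_eq_norm_sq,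
    normSq_apply, normSq_apply, sub_re, sub_im, one_re, one_im]
  constructor <;> intro h <;> nlinarith

theorem ordinaryHypergeometric_pfaff (a b : ℂ) (hc : ∀ n : ℕ, c ≠ -(n : ℂ)) (hx : ‖x‖ < 1)
    (hre : x.re < 1 / 2) : ₂F₁ a b c x = (1 - x) ^ (-a) * ₂F₁ a (c - b) c (x / (x - 1)) := by
  let U : Set ℂ := Metric.ball 0 1 ∩ {z | z.re < 1 / 2}
  have hU : IsPreconnected U :=
    ((convex_ball 0 1).inter (convex_halfSpace_re_lt (1 / 2))).isPreconnected
  have hslit {z : ℂ} (hz : z ∈ U) : 1 - z ∈ slitPlane := by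
    have hzre : z.re < 1 / 2 := hz.2
    left
    rw [sub_re, one_re]
    linarith
  have hsub {z : ℂ} (hz : z ∈ U) : z - 1 ≠ 0 := by
    rw [← neg_sub, neg_ne_zero]
    exact slitPlane_ne_zero (hslit hz)
  have hmaps : Set.MapsTo (fun z : ℂ => z / (z - 1)) U (Metric.ball 0 1) := fun z hz => by
    rw [mem_ball_zero_iff, norm_div, div_lt_one (norm_pos_iff.2 (hsub hz)), norm_sub_rev]
    exact norm_lt_norm_one_sub_iff.2 hz.2
  have hleft : AnalyticOnNhd ℂ (₂F₁ a b c) U :=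
    (analyticOnNhd_ordinaryHypergeometric a b c).mono Set.inter_subset_left
  have hpow : AnalyticOnNhd ℂ (fun z : ℂ => (1 - z) ^ (-a)) U := fun z hz =>
    (analyticAt_const.sub analyticAt_id).cpow analyticAt_const (hslit hz)
  have hmobius : AnalyticOnNhd ℂ (fun z : ℂ => z / (z - 1)) U := fun z hz =>
    analyticAt_id.div (analyticAt_id.sub analyticAt_const) (hsub hz)
  have hright := hpow.mul ((analyticOnNhd_ordinaryHypergeometric a (c - b) c).comp hmobius hmaps)
  have hnear : ∀ᶠ z in 𝓝 (0 : ℂ),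
      ₂F₁ a b c z = (1 - z) ^ (-a) * ₂F₁ a (c - b) c (z / (z - 1)) := by
    filter_upwards [Metric.ball_mem_nhds (0 : ℂ) one_half_pos] with z hz
    exact ordinaryHypergeometric_pfaff_of_norm_lt_half a b hc (mem_ball_zero_iff.1 hz)
  exact hleft.eqOn_of_preconnected_of_eventuallyEq hright hU (by simp [U]) hnear
    ⟨mem_ball_zero_iff.2 hx, hre⟩

theorem appellF2_pfaff (a b₁ b₂ c₂ : ℂ) (hc : ∀ n : ℕ, c ≠ -(n : ℂ)) (hxy : ‖x‖ + ‖y‖ < 1)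
    (hxy' : ‖x‖ + ‖y‖ < ‖1 - x‖) :
    appellF2 a b₁ b₂ c c₂ x y =
      (1 - x) ^ (-a) * appellF2 a (c - b₁) b₂ c c₂ (x / (x - 1)) (y / (1 - x)) := by
  have hx : ‖x‖ < 1 := by linarith [norm_nonneg y]
  have hre : x.re < 1 / 2 := norm_lt_norm_one_sub_iff.1 (by linarith [norm_nonneg y])
  have hpos : 0 < ‖1 - x‖ := by linarith [norm_nonneg x, norm_nonneg y]
  have himage : ‖y / (1 - x)‖ + ‖x / (x - 1)‖ < 1 := by
    rw [norm_div, norm_div, norm_sub_rev x 1, ← add_div, div_lt_one hpos, add_comm]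
    exact hxy'
  rw [appellF2_swap, appellF2_swap _ (c - b₁),
    appellF2_eq_tsum_ordinaryHypergeometric _ _ _ _ _ (by rwa [add_comm]),
    appellF2_eq_tsum_ordinaryHypergeometric _ _ _ _ _ himage, ← tsum_mul_left]
  refine tsum_congr fun n => ?_
  rw [ordinaryHypergeometric_pfaff (a + n) b₁ hc hx hre,
    cpow_neg_add_natCast (norm_pos_iff.1 hpos), div_pow]
  ring

end Pfaff

theorem statement3_general (α β₁ β₂ γ₁ γ₂ A B : ℂ)
    (hγ₁ : ∀ n : ℕ, γ₁ ≠ -(n : ℂ)) (_hγ₂ : ∀ n : ℕ, γ₂ ≠ -(n : ℂ))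
    (hA : 1 + ‖A - B‖ < ‖A‖) (hA1 : 1 + ‖A - B‖ < ‖A - 1‖) :
    A ^ (-α) * appellF2 α β₁ β₂ γ₁ γ₂ (1 / A) (1 - B / A) =
      (A - 1) ^ (-α) *
        appellF2 α (γ₁ - β₁) β₂ γ₁ γ₂ (1 / (1 - A)) (1 - (1 - B) / (1 - A)) := by
  have hApos : 0 < ‖A‖ := by linarith [norm_nonneg (A - B)]
  have hA0 : A ≠ 0 := norm_pos_iff.1 hApos
  have hsub : A - 1 ≠ 0 := norm_pos_iff.1 (by linarith [norm_nonneg (A - B)])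
  have hsub' : 1 - A ≠ 0 := by rwa [← neg_sub, neg_ne_zero]
  have hnorm : ‖1 / A‖ + ‖1 - B / A‖ = (1 + ‖A - B‖) / ‖A‖ := by
    rw [one_sub_div hA0, norm_div, norm_div, norm_one, ← add_div]
  have hx : 1 / A / (1 / A - 1) = 1 / (1 - A) := by
    rw [div_sub_one hA0, div_div_div_cancel_right₀ hA0]
  have hy : (1 - B / A) / (1 - 1 / A) = 1 - (1 - B) / (1 - A) := by
    rw [one_sub_div hA0, one_sub_div hA0, div_div_div_cancel_right₀ hA0]
    field_simp
    ring
  rw [appellF2_pfaff α β₁ β₂ γ₂ hγ₁ (by rwa [hnorm, div_lt_one hApos])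
    (by rwa [hnorm, one_sub_div hA0, norm_div, div_lt_div_iff_of_pos_right hApos]), hx, hy,
    one_sub_inv_cpow hA0 (sub_ne_zero.1 hsub), ← mul_assoc,
    mul_div_cancel₀ _ (by simp [cpow_eq_zero_iff, hA0])]

/-- Linear transformation for Appell's `F₂` induced by `(A,B) ↦ (1−A,1−B)`. -/
theorem statement3 (α β₁ β₂ γ₁ γ₂ : ℂ) (A B : ℝ)
    (hγ₁ : ∀ n : ℕ, γ₁ ≠ -(n : ℂ)) (hγ₂ : ∀ n : ℕ, γ₂ ≠ -(n : ℂ))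
    (hB : 2 < B) (hBA : B < A) :
    (A : ℂ) ^ (-α) *
      appellF2 α β₁ β₂ γ₁ γ₂ (1 / (A : ℂ)) (1 - (B : ℂ) / (A : ℂ)) =
    ((A : ℂ) - 1) ^ (-α) *
      appellF2 α (γ₁ - β₁) β₂ γ₁ γ₂ (1 / (1 - (A : ℂ)))
        (1 - (1 - (B : ℂ)) / (1 - (A : ℂ))) := by
  apply statement3_general α β₁ β₂ γ₁ γ₂ A B hγ₁ hγ₂ <;> norm_cast <;>
    simp only [Real.norm_eq_abs] <;> grind
end

section
/- (Clausen-type identity) Let β₁, β₂ be real numbers with β₁ > 0 and β₂ > 0, and let Λ₁ be a real number with 0 < Λ₁ < √2 − 1, and set z₁ = −4Λ₁²/(1−Λ₁²)² (so |z₁| < 1). Then ₃F₂(β₁+β₂−1/2, β₁, β₁−β₂+1/2; 2β₁, β₁+1/2; z₁) = (1−Λ₁²)^{2β₁+2β₂−1} · ( ₂F₁(β₁+β₂−1/2, β₂; β₁+1/2; Λ₁²) )². -/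
/-- Pochhammer symbol `(x)_n` in `ℝ`. -/
noncomputable def rpoch (x : ℝ) (n : ℕ) : ℝ := (ascPochhammer ℝ n).eval x

/-- Gauss' hypergeometric series `₂F₁` (real). -/
noncomputable def hyp2F1 (a b c z : ℝ) : ℝ :=
  ∑' n : ℕ, rpoch a n * rpoch b n / (rpoch c n * (n.factorial : ℝ)) * z ^ n

/-- Generalized hypergeometric series `₃F₂` (real). -/
noncomputable def hyp3F2 (a₁ a₂ a₃ b₁ b₂ z : ℝ) : ℝ :=
  ∑' n : ℕ, rpoch a₁ n * rpoch a₂ n * rpoch a₃ n /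
    (rpoch b₁ n * rpoch b₂ n * (n.factorial : ℝ)) * z ^ n

/-!
Write `a = (β₁ + β₂ - 1/2) / 2`, `b = (β₁ - β₂ + 1/2) / 2` and `c = a + b + 1/2`, so that
`β₁ = a + b` and `β₂ = a - b + 1/2`. The identity is then the composition of two classical ones.
Clausen's formula says that `₂F₁(a, b; c; z) ^ 2 = ₃F₂(2a, a + b, 2b; 2(a + b), c; z)`: the square
of a solution of the hypergeometric equation satisfies the symmetric square equation, whose
coefficient recurrence is that of the `₃F₂`. Gauss' quadratic transformation says that
`₂F₁(2a, a - b + 1/2; c; x) = (1 - x) ^ (-2a) * ₂F₁(a, b; c; -4x / (1 - x) ^ 2)`: expanding each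
power of `1 - x` on the right by the binomial series gives a double series, whose diagonal sums
satisfy, by creative telescoping, the recurrence of the coefficients on the left.
-/

open Finset Filter Topology PowerSeries

lemma eq_of_first_order_recurrence {M : Type*} [Mul M] [Zero M] [IsLeftCancelMulZero M]
    {u v p q : ℕ → M} (hp : ∀ n, p n ≠ 0) (h_zero : u 0 = v 0)
    (hu : ∀ n, p n * u (n + 1) = q n * u n) (hv : ∀ n, p n * v (n + 1) = q n * v n) : u = v := by
  funext n
  induction n with
  | zero => exact h_zero
  | succ n ih => exact mul_left_cancel₀ (hp n) (by rw [hu, hv, ih])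

section Pochhammer

lemma rpoch_zero (x : ℝ) : rpoch x 0 = 1 := by simp [rpoch]

lemma rpoch_succ (x : ℝ) (n : ℕ) : rpoch x (n + 1) = rpoch x n * (x + n) :=
  ascPochhammer_succ_eval n x

lemma mul_rpoch_add_one (x : ℝ) (n : ℕ) : x * rpoch (x + 1) n = rpoch x (n + 1) := by
  simp [rpoch, ascPochhammer_succ_left]

lemma rpoch_ne_zero {x : ℝ} (hx : ∀ n : ℕ, x + n ≠ 0) (n : ℕ) : rpoch x n ≠ 0 := by
  induction n with
  | zero => simp [rpoch_zero]
  | succ n ih => rw [rpoch_succ]; exact mul_ne_zero ih (hx n)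

lemma abs_rpoch_le {x y : ℝ} (hxy : |x| ≤ y) (n : ℕ) : |rpoch x n| ≤ rpoch y n := by
  induction n with
  | zero => simp [rpoch_zero]
  | succ n ih =>
    have factor_le : |x + n| ≤ y + n := by
      simpa using (abs_add_le x n).trans (add_le_add_left hxy |(n : ℝ)|)
    rw [rpoch_succ, rpoch_succ, abs_mul]
    exact mul_le_mul ih factor_le (abs_nonneg _) ((abs_nonneg _).trans ih)

lemma multichoose_eq_rpoch_div (s : ℝ) (k : ℕ) :
    Ring.multichoose s k = rpoch s k / k.factorial := by
  have h := Ring.factorial_nsmul_multichoose_eq_ascPochhammer s k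
  rw [Polynomial.ascPochhammer_smeval_eq_eval, nsmul_eq_mul] at h
  rw [rpoch, ← h, mul_div_cancel_left₀ _ (by positivity)]

lemma succ_mul_multichoose_succ (s : ℝ) (k : ℕ) :
    (k + 1) * Ring.multichoose s (k + 1) = (s + k) * Ring.multichoose s k := by
  simp only [multichoose_eq_rpoch_div, rpoch_succ, Nat.factorial_succ]
  push_cast
  field_simp

lemma mul_multichoose_add_one (s : ℝ) (k : ℕ) :
    s * Ring.multichoose (s + 1) k = (s + k) * Ring.multichoose s k := by
  simp only [multichoose_eq_rpoch_div, ← mul_div_assoc, mul_rpoch_add_one, rpoch_succ]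
  ring

lemma abs_multichoose_le {s t : ℝ} (hst : |s| ≤ t) (k : ℕ) :
    |Ring.multichoose s k| ≤ Ring.multichoose t k := by
  rw [multichoose_eq_rpoch_div, multichoose_eq_rpoch_div, abs_div, Nat.abs_cast]
  gcongr
  exact abs_rpoch_le hst k

end Pochhammer

section BinomialSeries

variable {x : ℝ}

lemma hasSum_multichoose_mul_pow (s : ℝ) (hx : |x| < 1) :
    HasSum (fun k => Ring.multichoose s k * x ^ k) ((1 - x) ^ (-s)) := by
  have h := (Real.one_div_one_sub_rpow_hasFPowerSeriesOnBall_zero s).hasSum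
    (y := x) (by simpa [enorm_eq_nnnorm, ← NNReal.coe_lt_coe] using hx)
  rw [Real.rpow_neg (by linarith [(abs_lt.mp hx).2]), ← one_div]
  simpa only [zero_add, FormalMultilinearSeries.ofScalars_apply_eq, smul_eq_mul,
    ← Ring.multichoose_eq] using h

lemma hasSum_multichoose_add_two_mul (s : ℝ) (n : ℕ) (hx : |x| < 1) :
    HasSum (fun k => Ring.multichoose (s + 2 * n) k * x ^ (n + k))
      ((1 - x) ^ (-s) * (x / (1 - x) ^ 2) ^ n) := by
  have one_sub_pos : 0 < 1 - x := by linarith [(abs_lt.mp hx).2]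
  have sum_eq : (1 - x) ^ (-s) * (x / (1 - x) ^ 2) ^ n = x ^ n * (1 - x) ^ (-(s + 2 * n)) := by
    rw [neg_add, Real.rpow_add one_sub_pos, Real.rpow_neg one_sub_pos.le (2 * (n : ℝ)),
      Real.rpow_mul one_sub_pos.le, Real.rpow_natCast, Real.rpow_two]
    ring
  rw [sum_eq]
  simpa only [pow_add, mul_left_comm] using
    (hasSum_multichoose_mul_pow (s + 2 * n) hx).mul_left (x ^ n)

end BinomialSeries

section Coefficients

/-- The coefficient of `z ^ n` in `₂F₁(a, b; c; z)`. -/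
noncomputable def hyp2F1Coeff (a b c : ℝ) (n : ℕ) : ℝ :=
  rpoch a n * rpoch b n / (rpoch c n * (n.factorial : ℝ))

/-- The coefficient of `z ^ n` in `₃F₂(a₁, a₂, a₃; b₁, b₂; z)`. -/
noncomputable def hyp3F2Coeff (a₁ a₂ a₃ b₁ b₂ : ℝ) (n : ℕ) : ℝ :=
  rpoch a₁ n * rpoch a₂ n * rpoch a₃ n / (rpoch b₁ n * rpoch b₂ n * (n.factorial : ℝ))

lemma hyp2F1_eq_tsum (a b c z : ℝ) : hyp2F1 a b c z = ∑' n, hyp2F1Coeff a b c n * z ^ n := rfl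

lemma hyp3F2_eq_tsum (a₁ a₂ a₃ b₁ b₂ z : ℝ) :
    hyp3F2 a₁ a₂ a₃ b₁ b₂ z = ∑' n, hyp3F2Coeff a₁ a₂ a₃ b₁ b₂ n * z ^ n := rfl

lemma hyp2F1Coeff_zero (a b c : ℝ) : hyp2F1Coeff a b c 0 = 1 := by
  simp [hyp2F1Coeff, rpoch_zero]

lemma hyp3F2Coeff_zero (a₁ a₂ a₃ b₁ b₂ : ℝ) : hyp3F2Coeff a₁ a₂ a₃ b₁ b₂ 0 = 1 := by
  simp [hyp3F2Coeff, rpoch_zero]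

lemma hyp2F1Coeff_succ (a b : ℝ) {c : ℝ} (hc : ∀ n : ℕ, c + n ≠ 0) (n : ℕ) :
    (n + 1) * (c + n) * hyp2F1Coeff a b c (n + 1) =
      (a + n) * (b + n) * hyp2F1Coeff a b c n := by
  have := hc n
  have := rpoch_ne_zero hc n
  simp only [hyp2F1Coeff, rpoch_succ, Nat.factorial_succ]
  push_cast
  field_simp

lemma hyp3F2Coeff_succ (a₁ a₂ a₃ : ℝ) {b₁ b₂ : ℝ} (hb₁ : ∀ n : ℕ, b₁ + n ≠ 0)
    (hb₂ : ∀ n : ℕ, b₂ + n ≠ 0) (n : ℕ) :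
    (n + 1) * (b₁ + n) * (b₂ + n) * hyp3F2Coeff a₁ a₂ a₃ b₁ b₂ (n + 1) =
      (a₁ + n) * (a₂ + n) * (a₃ + n) * hyp3F2Coeff a₁ a₂ a₃ b₁ b₂ n := by
  have := hb₁ n
  have := hb₂ n
  have := rpoch_ne_zero hb₁ n
  have := rpoch_ne_zero hb₂ n
  simp only [hyp3F2Coeff, rpoch_succ, Nat.factorial_succ]
  push_cast
  field_simp

lemma summable_hyp2F1Coeff_mul_pow (a b : ℝ) {c z : ℝ} (hc : ∀ n : ℕ, c + n ≠ 0) (hz : |z| < 1) :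
    Summable fun n => hyp2F1Coeff a b c n * z ^ n := by
  obtain ⟨r, hzr, hr⟩ := exists_between hz
  have ratio_tendsto : Tendsto
      (fun n : ℕ => |(a + 1 * n) / (c + 1 * n) * ((b + 1 * n) / (1 + 1 * n)) * z|)
      atTop (𝓝 |z|) := by
    simpa using (((tendsto_add_mul_div_add_mul_atTop_nhds a c 1 one_ne_zero).mul
      (tendsto_add_mul_div_add_mul_atTop_nhds b 1 1 one_ne_zero)).mul_const z).abs
  refine summable_of_ratio_norm_eventually_le hr ?_
  filter_upwards [ratio_tendsto.eventually_le_const hzr] with n ratio_le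
  have term_succ : hyp2F1Coeff a b c (n + 1) * z ^ (n + 1) =
      (a + 1 * n) / (c + 1 * n) * ((b + 1 * n) / (1 + 1 * n)) * z *
        (hyp2F1Coeff a b c n * z ^ n) := by
    have := hc n
    have : (1 : ℝ) + n ≠ 0 := by positivity
    simp only [one_mul]
    field_simp
    linear_combination z ^ (n + 1) * hyp2F1Coeff_succ a b hc n
  rw [term_succ, norm_mul]
  gcongr
  exact ratio_le

end Coefficients

section Clausen

/-- The Euler operator `θ = X * d/dX` on formal power series, as a derivation. -/
noncomputable def eulerDerivation (R : Type*) [CommSemiring R] : Derivation R R⟦X⟧ R⟦X⟧ :=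
  (X : R⟦X⟧) • derivative R

lemma coeff_eulerDerivation {R : Type*} [CommSemiring R] (f : R⟦X⟧) (n : ℕ) :
    coeff n (eulerDerivation R f) = n * coeff n f := by
  cases n with
  | zero => simp [eulerDerivation]
  | succ n =>
    simp [eulerDerivation, coeff_succ_X_mul, coeff_derivative, mul_comm]

lemma eulerDerivation_X (R : Type*) [CommSemiring R] : eulerDerivation R X = X := by
  simp [eulerDerivation]

/-- For the hypergeometric equation `k = c - 1`, `s = a + b` and `p = a * b`, so `hks` is Clausen's
condition `c = a + b + 1/2`. -/
lemma symmetric_square_equation {R A : Type*} [CommRing R] [CommRing A] [Algebra R A]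
    (D : Derivation R A A) {x f : A} {k s p : R} (hx : D x = x) (hks : 2 * k = 2 * s - 1)
    (hf : D (D f) + k • D f = x * (D (D f) + s • D f + p • f)) :
    D (D (D (f ^ 2))) + (3 * k) • D (D (f ^ 2)) + (2 * k ^ 2) • D (f ^ 2) =
      x * (D (D (D (f ^ 2))) + (3 * s) • D (D (f ^ 2)) + (2 * s ^ 2 + 4 * p) • D (f ^ 2) +
        (4 * p * s) • f ^ 2) := by
  have hf' := congrArg D hf
  have hks' := congrArg (algebraMap R A) hks
  simp only [map_add, map_sub, map_mul, map_ofNat, map_one, Algebra.smul_def,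
    Derivation.leibniz, Derivation.map_algebraMap, sq, hx, mul_zero, add_zero] at hf hf' hks' ⊢
  linear_combination (2 * f) * hf' + (6 * D f + 4 * algebraMap R A k * f) * hf +
    2 * x * f * (D (D f) + algebraMap R A s * D f + algebraMap R A p * f) * hks'

variable (a b : ℝ)

/-- The formal power series `₂F₁(a, b; c; X)`. -/
noncomputable def hyp2F1Series (c : ℝ) : ℝ⟦X⟧ := PowerSeries.mk (hyp2F1Coeff a b c)

lemma hyp2F1Series_equation {c : ℝ} (hc : ∀ n : ℕ, c + n ≠ 0) :
    let θ := eulerDerivation ℝ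
    let f := hyp2F1Series a b c
    θ (θ f) + (c - 1) • θ f = X * (θ (θ f) + (a + b) • θ f + (a * b) • f) := by
  ext n
  cases n with
  | zero =>
    rw [map_add, coeff_smul, coeff_zero_X_mul]
    simp only [coeff_eulerDerivation, Nat.cast_zero, zero_mul, smul_zero, add_zero]
  | succ n =>
    simp only [coeff_succ_X_mul, map_add, coeff_smul, coeff_eulerDerivation, hyp2F1Series,
      coeff_mk, smul_eq_mul]
    push_cast
    linear_combination hyp2F1Coeff_succ a b hc n

variable {a b}

lemma add_natCast_ne_zero_of_two_mul (hab : ∀ n : ℕ, 2 * (a + b) + n ≠ 0) (n : ℕ) :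
    a + b + 1 / 2 + n ≠ 0 := fun h =>
  hab (2 * n + 1) (by push_cast; linear_combination 2 * h)

lemma coeff_hyp2F1Series_sq_succ (hc : ∀ n : ℕ, a + b + 1 / 2 + n ≠ 0) (n : ℕ) :
    (n + 1) * (2 * (a + b) + n) * (a + b + 1 / 2 + n) *
        coeff (n + 1) (hyp2F1Series a b (a + b + 1 / 2) ^ 2) =
      (2 * a + n) * (a + b + n) * (2 * b + n) *
        coeff n (hyp2F1Series a b (a + b + 1 / 2) ^ 2) := by
  have equation := congrArg (coeff (n + 1)) <| symmetric_square_equation (eulerDerivation ℝ)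
    (eulerDerivation_X ℝ) (by ring) (hyp2F1Series_equation a b hc)
  simp only [coeff_succ_X_mul, map_add, coeff_smul, coeff_eulerDerivation, smul_eq_mul]
    at equation
  push_cast at equation
  linear_combination equation

lemma sum_antidiagonal_hyp2F1Coeff_mul (hab : ∀ n : ℕ, 2 * (a + b) + n ≠ 0) (m : ℕ) :
    ∑ p ∈ antidiagonal m,
        hyp2F1Coeff a b (a + b + 1 / 2) p.1 * hyp2F1Coeff a b (a + b + 1 / 2) p.2 =
      hyp3F2Coeff (2 * a) (a + b) (2 * b) (2 * (a + b)) (a + b + 1 / 2) m := by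
  have hc := add_natCast_ne_zero_of_two_mul hab
  have coeff_sq : (fun n => coeff n (hyp2F1Series a b (a + b + 1 / 2) ^ 2)) =
      hyp3F2Coeff (2 * a) (a + b) (2 * b) (2 * (a + b)) (a + b + 1 / 2) :=
    eq_of_first_order_recurrence
      (fun n => mul_ne_zero (mul_ne_zero (Nat.cast_add_one_ne_zero n) (hab n)) (hc n))
      (by simp [hyp2F1Series, hyp2F1Coeff_zero, hyp3F2Coeff_zero])
      (coeff_hyp2F1Series_sq_succ hc) (hyp3F2Coeff_succ _ _ _ hab hc)
  simp only [← coeff_sq, sq, coeff_mul, hyp2F1Series, coeff_mk]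

theorem hyp2F1_sq_eq_hyp3F2 {z : ℝ} (hab : ∀ n : ℕ, 2 * (a + b) + n ≠ 0) (hz : |z| < 1) :
    hyp2F1 a b (a + b + 1 / 2) z ^ 2 =
      hyp3F2 (2 * a) (a + b) (2 * b) (2 * (a + b)) (a + b + 1 / 2) z := by
  have summable_norm :=
    (summable_hyp2F1Coeff_mul_pow a b (add_natCast_ne_zero_of_two_mul hab) hz).norm
  rw [sq, hyp2F1_eq_tsum, hyp3F2_eq_tsum,
    tsum_mul_tsum_eq_tsum_sum_antidiagonal_of_summable_norm summable_norm summable_norm]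
  congr 1 with m
  rw [← sum_antidiagonal_hyp2F1Coeff_mul hab, sum_mul]
  refine sum_congr rfl fun p hp => ?_
  rw [← mem_antidiagonal.mp hp]
  ring

end Clausen

section QuadraticTransformation

lemma tsum_tsum_eq_tsum_sum_antidiagonal {A E : Type*} [AddCommMonoid A] [HasAntidiagonal A]
    [AddCommGroup E] [UniformSpace E] [IsUniformAddGroup E] [CompleteSpace E] [T0Space E]
    {f : A × A → E} (hf : Summable f) :
    ∑' i, ∑' j, f (i, j) = ∑' m, ∑ p ∈ antidiagonal m, f p := by
  have hf_sigma := HasAntidiagonal.sigmaAntidiagonalEquivProd.summable_iff.mpr hf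
  rw [← hf.tsum_prod, ← HasAntidiagonal.sigmaAntidiagonalEquivProd.tsum_eq f]
  exact hf_sigma.tsum_sigma.trans (tsum_congr fun m => Finset.tsum_subtype _ f)

/-- The coefficient of `x ^ (n + k)` contributed by the `n`-th term of `₂F₁(a, b; a + b + 1/2; ·)`
when `(1 - x) ^ (-2a) * ₂F₁(a, b; a + b + 1/2; -4x / (1 - x) ^ 2)` is expanded by the binomial
series; the argument is the pair `(n, k)`. -/
noncomputable def quadraticTerm (a b : ℝ) (p : ℕ × ℕ) : ℝ :=
  hyp2F1Coeff a b (a + b + 1 / 2) p.1 * (-4) ^ p.1 * Ring.multichoose (2 * a + 2 * p.1) p.2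

/-- The certificate for summing `quadraticTerm a b` over antidiagonals by creative telescoping. -/
noncomputable def quadraticCertificate (a b : ℝ) (p : ℕ × ℕ) : ℝ :=
  p.1 * (a + b + 1 / 2 + p.1 - 1) * (hyp2F1Coeff a b (a + b + 1 / 2) p.1 * (-4) ^ p.1) *
    Ring.multichoose (2 * a + 2 * p.1 - 1) p.2

variable {a b : ℝ}

lemma succ_mul_quadraticTerm_succ (n k : ℕ) :
    (k + 1) * quadraticTerm a b (n, k + 1) =
      (2 * a + 2 * n + k) * quadraticTerm a b (n, k) := by
  simp only [quadraticTerm]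
  linear_combination hyp2F1Coeff a b (a + b + 1 / 2) n * (-4) ^ n *
    succ_mul_multichoose_succ (2 * a + 2 * n) k

lemma succ_mul_quadraticCertificate_succ_right (n k : ℕ) :
    (k + 1) * quadraticCertificate a b (n, k + 1) =
      n * (a + b + 1 / 2 + n - 1) * (2 * a + 2 * n - 1) * quadraticTerm a b (n, k) := by
  have h_succ := succ_mul_multichoose_succ (2 * a + 2 * n - 1) k
  have h_add_one := mul_multichoose_add_one (2 * a + 2 * n - 1) k
  rw [sub_add_cancel] at h_add_one
  simp only [quadraticCertificate, quadraticTerm]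
  linear_combination n * (a + b + 1 / 2 + n - 1) *
    (hyp2F1Coeff a b (a + b + 1 / 2) n * (-4) ^ n) * (h_succ - h_add_one)

lemma quadraticCertificate_succ_left (hc : ∀ n : ℕ, a + b + 1 / 2 + n ≠ 0) (n k : ℕ) :
    quadraticCertificate a b (n + 1, k) =
      -2 * (b + n) * (2 * a + 2 * n + k) * quadraticTerm a b (n, k) := by
  have h_coeff := hyp2F1Coeff_succ a b hc n
  have h_add_one := mul_multichoose_add_one (2 * a + 2 * n) k
  simp only [quadraticCertificate, quadraticTerm]
  push_cast
  rw [show 2 * a + 2 * ((n : ℝ) + 1) - 1 = 2 * a + 2 * n + 1 by ring]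
  linear_combination (-4) ^ (n + 1) * Ring.multichoose (2 * a + 2 * n + 1) k * h_coeff -
    2 * (b + n) * hyp2F1Coeff a b (a + b + 1 / 2) n * (-4) ^ n * h_add_one

lemma quadraticTerm_telescopes (hc : ∀ n : ℕ, a + b + 1 / 2 + n ≠ 0) (n k : ℕ) :
    (n + k + 1) * (a + b + 1 / 2 + (n + k)) * quadraticTerm a b (n, k + 1) -
        (2 * a + (n + k)) * (a - b + 1 / 2 + (n + k)) * quadraticTerm a b (n, k) =
      quadraticCertificate a b (n, k + 1) - quadraticCertificate a b (n + 1, k) := by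
  refine mul_left_cancel₀ (Nat.cast_add_one_ne_zero k) ?_
  linear_combination
    (n + k + 1) * (a + b + 1 / 2 + (n + k)) * succ_mul_quadraticTerm_succ (a := a) (b := b) n k -
      succ_mul_quadraticCertificate_succ_right (a := a) (b := b) n k +
      (k + 1) * quadraticCertificate_succ_left hc n k

lemma sum_antidiagonal_quadraticTerm_succ (hc : ∀ n : ℕ, a + b + 1 / 2 + n ≠ 0) (m : ℕ) :
    (m + 1) * (a + b + 1 / 2 + m) * ∑ p ∈ antidiagonal (m + 1), quadraticTerm a b p =
      (2 * a + m) * (a - b + 1 / 2 + m) * ∑ p ∈ antidiagonal m, quadraticTerm a b p := by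
  have telescopes : ∀ p ∈ antidiagonal m,
      (m + 1) * (a + b + 1 / 2 + m) * quadraticTerm a b (p.1, p.2 + 1) -
          (2 * a + m) * (a - b + 1 / 2 + m) * quadraticTerm a b p =
        quadraticCertificate a b (p.1, p.2 + 1) - quadraticCertificate a b (p.1 + 1, p.2) := by
    intro p hp
    rw [← mem_antidiagonal.mp hp, Nat.cast_add]
    exact quadraticTerm_telescopes hc p.1 p.2
  have sum_telescopes := sum_congr rfl telescopes
  simp only [sum_sub_distrib, ← mul_sum] at sum_telescopes
  have certificate_sum :=
    (Nat.sum_antidiagonal_succ (n := m) (f := quadraticCertificate a b)).symm.trans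
      Nat.sum_antidiagonal_succ'
  have certificate_first : quadraticCertificate a b (0, m + 1) = 0 := by
    simp [quadraticCertificate]
  have certificate_last : quadraticCertificate a b (m + 1, 0) =
      (m + 1) * (a + b + 1 / 2 + m) * quadraticTerm a b (m + 1, 0) := by
    simp only [quadraticCertificate, quadraticTerm, Ring.multichoose_zero_right]
    push_cast
    ring
  rw [Nat.sum_antidiagonal_succ']
  linear_combination sum_telescopes + certificate_first - certificate_last - certificate_sum

lemma sum_antidiagonal_quadraticTerm (hc : ∀ n : ℕ, a + b + 1 / 2 + n ≠ 0) (m : ℕ) :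
    ∑ p ∈ antidiagonal m, quadraticTerm a b p =
      hyp2F1Coeff (2 * a) (a - b + 1 / 2) (a + b + 1 / 2) m :=
  congrFun (eq_of_first_order_recurrence (u := fun m => ∑ p ∈ antidiagonal m, quadraticTerm a b p)
    (fun n => mul_ne_zero (Nat.cast_add_one_ne_zero n) (hc n))
    (by simp [quadraticTerm, hyp2F1Coeff_zero])
    (sum_antidiagonal_quadraticTerm_succ hc) (hyp2F1Coeff_succ _ _ hc)) m

variable {x : ℝ}

lemma hasSum_quadraticTerm_mul_pow (n : ℕ) (hx : |x| < 1) :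
    HasSum (fun k => quadraticTerm a b (n, k) * x ^ (n + k))
      ((1 - x) ^ (-(2 * a)) *
        (hyp2F1Coeff a b (a + b + 1 / 2) n * (-(4 * x) / (1 - x) ^ 2) ^ n)) := by
  have sum_eq : (1 - x) ^ (-(2 * a)) *
        (hyp2F1Coeff a b (a + b + 1 / 2) n * (-(4 * x) / (1 - x) ^ 2) ^ n) =
      hyp2F1Coeff a b (a + b + 1 / 2) n * (-4) ^ n *
        ((1 - x) ^ (-(2 * a)) * (x / (1 - x) ^ 2) ^ n) := by
    rw [← neg_mul 4 x, mul_div_assoc, mul_pow]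
    ring
  rw [sum_eq]
  simpa only [quadraticTerm, mul_assoc] using
    (hasSum_multichoose_add_two_mul (2 * a) n hx).mul_left
      (hyp2F1Coeff a b (a + b + 1 / 2) n * (-4) ^ n)

lemma norm_quadraticTerm_mul_pow_le (p : ℕ × ℕ) :
    ‖quadraticTerm a b p * x ^ (p.1 + p.2)‖ ≤
      |hyp2F1Coeff a b (a + b + 1 / 2) p.1| * 4 ^ p.1 *
        (Ring.multichoose (|2 * a| + 2 * p.1) p.2 * |x| ^ (p.1 + p.2)) := by
  have parameter_le : |2 * a + 2 * p.1| ≤ |2 * a| + 2 * p.1 := by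
    simpa using abs_add_le (2 * a) (2 * (p.1 : ℝ))
  simp only [quadraticTerm, Real.norm_eq_abs, abs_mul, abs_pow, abs_neg, Nat.abs_ofNat, mul_assoc]
  gcongr
  simpa only [abs_mul, Nat.abs_ofNat] using abs_multichoose_le parameter_le p.2

lemma summable_quadraticTerm_mul_pow (hc : ∀ n : ℕ, a + b + 1 / 2 + n ≠ 0) (hx : |x| < 1)
    (hx_ratio : 4 * |x| < (1 - |x|) ^ 2) :
    Summable fun p : ℕ × ℕ => quadraticTerm a b p * x ^ (p.1 + p.2) := by
  refine Summable.of_norm_bounded ?_ norm_quadraticTerm_mul_pow_le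
  have row_hasSum (n : ℕ) :=
    (hasSum_multichoose_add_two_mul (x := |x|) |2 * a| n (by rwa [abs_abs])).mul_left
      (|hyp2F1Coeff a b (a + b + 1 / 2) n| * 4 ^ n)
  rw [summable_prod_of_nonneg fun p => (norm_nonneg _).trans (norm_quadraticTerm_mul_pow_le p)]
  refine ⟨fun n => (row_hasSum n).summable, ?_⟩
  have ratio_nonneg : 0 ≤ 4 * |x| / (1 - |x|) ^ 2 := by positivity
  have ratio_lt_one : 4 * |x| / (1 - |x|) ^ 2 < 1 :=
    (div_lt_one ((by positivity : 0 ≤ 4 * |x|).trans_lt hx_ratio)).mpr hx_ratio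
  have row_sums_summable := (summable_hyp2F1Coeff_mul_pow a b hc
    (by rwa [abs_of_nonneg ratio_nonneg])).abs.mul_left ((1 - |x|) ^ (-|2 * a|))
  refine row_sums_summable.congr fun n => ?_
  rw [(row_hasSum n).tsum_eq, abs_mul (hyp2F1Coeff ..), abs_of_nonneg (pow_nonneg ratio_nonneg n),
    mul_div_assoc, mul_pow]
  ring

theorem hyp2F1_quadratic_transformation (hc : ∀ n : ℕ, a + b + 1 / 2 + n ≠ 0) (hx : |x| < 1)
    (hx_ratio : 4 * |x| < (1 - |x|) ^ 2) :
    hyp2F1 (2 * a) (a - b + 1 / 2) (a + b + 1 / 2) x =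
      (1 - x) ^ (-(2 * a)) * hyp2F1 a b (a + b + 1 / 2) (-(4 * x) / (1 - x) ^ 2) := by
  symm
  calc (1 - x) ^ (-(2 * a)) * hyp2F1 a b (a + b + 1 / 2) (-(4 * x) / (1 - x) ^ 2)
      = ∑' n, ∑' k, quadraticTerm a b (n, k) * x ^ (n + k) := by
        simp only [hyp2F1_eq_tsum, ← tsum_mul_left, (hasSum_quadraticTerm_mul_pow _ hx).tsum_eq]
    _ = ∑' m, ∑ p ∈ antidiagonal m, quadraticTerm a b p * x ^ (p.1 + p.2) :=
        tsum_tsum_eq_tsum_sum_antidiagonal (summable_quadraticTerm_mul_pow hc hx hx_ratio)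
    _ = ∑' m, hyp2F1Coeff (2 * a) (a - b + 1 / 2) (a + b + 1 / 2) m * x ^ m := by
        refine tsum_congr fun m => ?_
        rw [← sum_antidiagonal_quadraticTerm hc, sum_mul]
        exact sum_congr rfl fun p hp => by rw [mem_antidiagonal.mp hp]
    _ = hyp2F1 (2 * a) (a - b + 1 / 2) (a + b + 1 / 2) x := (hyp2F1_eq_tsum ..).symm

end QuadraticTransformation

lemma four_mul_sq_lt_one_sub_sq_sq {t : ℝ} (ht : |t| < √2 - 1) : 4 * t ^ 2 < (1 - t ^ 2) ^ 2 := by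
  have two_mul_abs_lt : 2 * |t| < 1 - t ^ 2 := by
    nlinarith [sq_abs t, abs_nonneg t, Real.sq_sqrt (zero_le_two (α := ℝ))]
  nlinarith [sq_abs t, abs_nonneg t]

theorem statement7_general {β₁ Λ₁ z₁ : ℝ} (β₂ : ℝ) (hβ₁ : ∀ n : ℕ, 2 * β₁ + n ≠ 0)
    (hΛ : |Λ₁| < √2 - 1) (hz₁ : z₁ = -(4 * Λ₁ ^ 2) / (1 - Λ₁ ^ 2) ^ 2) :
    hyp3F2 (β₁ + β₂ - 1 / 2) β₁ (β₁ - β₂ + 1 / 2) (2 * β₁) (β₁ + 1 / 2) z₁ =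
      (1 - Λ₁ ^ 2) ^ (2 * β₁ + 2 * β₂ - 1) *
        hyp2F1 (β₁ + β₂ - 1 / 2) β₂ (β₁ + 1 / 2) (Λ₁ ^ 2) ^ 2 := by
  obtain ⟨a, b, rfl, rfl⟩ : ∃ a b : ℝ, β₁ = a + b ∧ β₂ = a - b + 1 / 2 :=
    ⟨(β₁ + β₂ - 1 / 2) / 2, (β₁ - β₂ + 1 / 2) / 2, by ring, by ring⟩
  have sq_lt_one : Λ₁ ^ 2 < 1 :=
    (sq_lt_one_iff_abs_lt_one _).mpr (by linarith [Real.sqrt_two_lt_three_halves])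
  have one_sub_pos : 0 < 1 - Λ₁ ^ 2 := sub_pos.mpr sq_lt_one
  have four_mul_sq_lt := four_mul_sq_lt_one_sub_sq_sq hΛ
  have abs_z₁_lt_one : |z₁| < 1 := by
    rwa [hz₁, neg_div, abs_neg, abs_of_nonneg (by positivity), div_lt_one (by positivity)]
  have clausen := hyp2F1_sq_eq_hyp3F2 hβ₁ abs_z₁_lt_one
  have quadratic := hyp2F1_quadratic_transformation (x := Λ₁ ^ 2)
    (add_natCast_ne_zero_of_two_mul hβ₁) (by rwa [abs_sq]) (by rwa [abs_sq])
  rw [show a + b + (a - b + 1 / 2) - 1 / 2 = 2 * a by ring,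
    show a + b - (a - b + 1 / 2) + 1 / 2 = 2 * b by ring,
    show 2 * (a + b) + 2 * (a - b + 1 / 2) - 1 = 2 * a * (2 : ℕ) by push_cast; ring,
    ← clausen, quadratic, ← hz₁, Real.rpow_mul_natCast one_sub_pos.le, ← mul_pow, ← mul_assoc,
    ← Real.rpow_add one_sub_pos, add_neg_cancel, Real.rpow_zero, one_mul]

/-- Clausen-type identity for `₃F₂` with the quadric property. -/
theorem statement7 (β₁ β₂ Λ₁ z₁ : ℝ) (hβ₁ : 0 < β₁) (hβ₂ : 0 < β₂)
    (hΛ0 : 0 < Λ₁) (hΛ1 : Λ₁ < Real.sqrt 2 - 1)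
    (hz₁ : z₁ = -(4 * Λ₁ ^ 2) / (1 - Λ₁ ^ 2) ^ 2) :
    hyp3F2 (β₁ + β₂ - 1 / 2) β₁ (β₁ - β₂ + 1 / 2) (2 * β₁) (β₁ + 1 / 2) z₁ =
      (1 - Λ₁ ^ 2) ^ (2 * β₁ + 2 * β₂ - 1) *
      (hyp2F1 (β₁ + β₂ - 1 / 2) β₂ (β₁ + 1 / 2) (Λ₁ ^ 2)) ^ (2 : ℕ) :=
  statement7_general β₂ (fun n => by positivity) (by rwa [abs_of_pos hΛ0]) hz₁
end

section
/- Let β₁, β₂ be real numbers with β₂ < 1 and β₁ + β₂ > 1/2, and let λ be a real number with 0 < λ < 1. Then ∫₀^λ x^{β₁+β₂−3/2} (1−x)^{−β₂} (λ−x)^{−β₂} dx = λ^{β₁−1/2} · Γ(β₁+β₂−1/2) Γ(1−β₂) / Γ(β₁+1/2) · ₂F₁(β₁+β₂−1/2, β₂; β₁+1/2; λ). (This evaluates the period integral of dx/y over the line segment [0, λ] for the superelliptic curve y^{2r} = x^{3r−p−q}(x−1)^{p}(x−λ)^{p} with β₁ = q/(2r), β₂ = p/(2r).) -/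
open MeasureTheory

/-!
Expand the factor `(1 - z x)^(-d)` into its binomial series and integrate term by term against the
beta weight `x^(a-1) (l - x)^(b-1)`. The `n`-th moment of this weight on `(0, l)` is its total mass
times `(a)_n / (a+b)_n * l^n`, so the integrated series is `₂F₁(a, d; a+b; z l)`.
-/

open ProbabilityTheory (beta beta_pos)

theorem Gamma_add_natCast {a : ℝ} (ha : ∀ k : ℕ, a ≠ -k) (n : ℕ) :
    Real.Gamma (a + n) = rpoch a n * Real.Gamma a := by
  induction n with
  | zero => simp [rpoch]
  | succ n ih =>
    have han : a + n ≠ 0 := fun h ↦ ha n (eq_neg_of_add_eq_zero_left h)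
    rw [Nat.cast_succ, ← add_assoc, Real.Gamma_add_one han, ih, rpoch, rpoch,
      ascPochhammer_succ_eval]
    ring

theorem beta_add_natCast {a b : ℝ} (ha : ∀ k : ℕ, a ≠ -k) (hab : ∀ k : ℕ, a + b ≠ -k) (n : ℕ) :
    beta (a + n) b = rpoch a n / rpoch (a + b) n * beta a b := by
  rw [beta, beta, add_right_comm, Gamma_add_natCast ha, Gamma_add_natCast hab, mul_assoc,
    mul_div_mul_comm]

theorem ringChoose_add_sub_one_eq_rpoch_div (d : ℝ) (n : ℕ) :
    Ring.choose (d + n - 1) n = rpoch d n / n.factorial := by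
  rw [← Ring.multichoose_eq, eq_div_iff (by positivity), rpoch,
    ← Polynomial.ascPochhammer_smeval_eq_eval, ← Ring.factorial_nsmul_multichoose_eq_ascPochhammer,
    nsmul_eq_mul, mul_comm]

theorem hasSum_one_sub_rpow_neg (d : ℝ) {x : ℝ} (hx : |x| < 1) :
    HasSum (fun n : ℕ ↦ rpoch d n / n.factorial * x ^ n) ((1 - x) ^ (-d)) := by
  have h := (Real.one_div_one_sub_rpow_hasFPowerSeriesOnBall_zero d).hasSum (y := x)
    (by simpa [enorm_eq_nnnorm] using! hx)
  rw [Real.rpow_neg (sub_nonneg.2 (lt_of_abs_lt hx).le)]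
  simpa [ringChoose_add_sub_one_eq_rpoch_div, FormalMultilinearSeries.ofScalars_apply_eq,
    mul_comm] using h

theorem hasSum_integral_mul_powerSeries {𝕜 : Type*} [RCLike 𝕜] {μ : Measure 𝕜} {w : 𝕜 → 𝕜}
    {c : ℕ → 𝕜} {r : ℝ} (hr : ∀ᵐ x ∂μ, ‖x‖ ≤ r) (hw : Integrable w μ)
    (hc : Summable fun n ↦ ‖c n‖ * r ^ n) :
    HasSum (fun n ↦ c n * ∫ x, w x * x ^ n ∂μ) (∫ x, w x * ∑' n, c n * x ^ n ∂μ) := by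
  have norm_pow_le (n : ℕ) : ∀ᵐ x ∂μ, ‖x ^ n‖ ≤ r ^ n := by
    filter_upwards [hr] with x hx
    simpa only [norm_pow] using pow_le_pow_left₀ (norm_nonneg x) hx n
  have integrable_term (n : ℕ) : Integrable (fun x ↦ c n * (w x * x ^ n)) μ :=
    (hw.mul_bdd (by fun_prop) (norm_pow_le n)).const_mul _
  have integral_norm_le (n : ℕ) :
      ∫ x, ‖c n * (w x * x ^ n)‖ ∂μ ≤ ‖c n‖ * r ^ n * ∫ x, ‖w x‖ ∂μ := by
    rw [← integral_const_mul]
    refine integral_mono_ae (integrable_term n).norm (hw.norm.const_mul _) ?_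
    filter_upwards [norm_pow_le n] with x hx
    calc ‖c n * (w x * x ^ n)‖ = ‖c n‖ * ‖x ^ n‖ * ‖w x‖ := by rw [norm_mul, norm_mul]; ring
      _ ≤ ‖c n‖ * r ^ n * ‖w x‖ := by gcongr
  have summable_integral_norm : Summable fun n ↦ ∫ x, ‖c n * (w x * x ^ n)‖ ∂μ :=
    .of_nonneg_of_le (fun n ↦ by positivity) integral_norm_le (hc.mul_right _)
  have h := hasSum_integral_of_summable_integral_norm integrable_term summable_integral_norm
  simp_rw [integral_const_mul, mul_left_comm (c _), tsum_mul_left] at h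
  exact h

section BetaWeight

variable {a b l : ℝ}

theorem setIntegral_rpow_mul_sub_rpow (ha : 0 < a) (hb : 0 < b) (hl : 0 < l) :
    ∫ x in Set.Ioo 0 l, x ^ (a - 1) * (l - x) ^ (b - 1) = l ^ (a + b - 1) * beta a b := by
  apply Complex.ofReal_injective
  calc ((∫ x in Set.Ioo 0 l, x ^ (a - 1) * (l - x) ^ (b - 1) : ℝ) : ℂ)
      = ∫ x in (0 : ℝ)..l, (x : ℂ) ^ ((a : ℂ) - 1) * ((l : ℂ) - x) ^ ((b : ℂ) - 1) := by
        rw [intervalIntegral.integral_of_le hl.le, integral_Ioc_eq_integral_Ioo,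
          ← integral_complex_ofReal]
        refine setIntegral_congr_fun measurableSet_Ioo fun x hx ↦ ?_
        simp [Complex.ofReal_cpow hx.1.le, Complex.ofReal_cpow (sub_nonneg.2 hx.2.le)]
    _ = (l : ℂ) ^ ((a : ℂ) + b - 1) * Complex.betaIntegral a b :=
        Complex.betaIntegral_scaled a b hl
    _ = (l ^ (a + b - 1) * beta a b : ℝ) := by
        rw [Complex.betaIntegral_eq_Gamma_mul_div _ _ (by simpa) (by simpa)]
        simp [beta, Complex.ofReal_cpow hl.le, ← Complex.Gamma_ofReal]

/- The Bochner integral of a non-integrable function is `0`, whereas the value just computed is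
positive. -/
theorem integrableOn_rpow_mul_sub_rpow (ha : 0 < a) (hb : 0 < b) (hl : 0 < l) :
    IntegrableOn (fun x ↦ x ^ (a - 1) * (l - x) ^ (b - 1)) (Set.Ioo 0 l) := by
  refine .of_integral_ne_zero ?_
  rw [setIntegral_rpow_mul_sub_rpow ha hb hl]
  exact (mul_pos (Real.rpow_pos_of_pos hl _) (beta_pos ha hb)).ne'

theorem setIntegral_rpow_mul_sub_rpow_mul_pow (ha : 0 < a) (hb : 0 < b) (hl : 0 < l) (n : ℕ) :
    ∫ x in Set.Ioo 0 l, x ^ (a - 1) * (l - x) ^ (b - 1) * x ^ n =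
      l ^ (a + b - 1) * beta a b * (rpoch a n / rpoch (a + b) n * l ^ n) := by
  have ne_neg_natCast {t : ℝ} (ht : 0 < t) (k : ℕ) : t ≠ -k :=
    ((neg_nonpos.2 k.cast_nonneg).trans_lt ht).ne'
  calc ∫ x in Set.Ioo 0 l, x ^ (a - 1) * (l - x) ^ (b - 1) * x ^ n
      = ∫ x in Set.Ioo 0 l, x ^ (a + n - 1) * (l - x) ^ (b - 1) := by
        refine setIntegral_congr_fun measurableSet_Ioo fun x hx ↦ ?_
        simp only [add_sub_right_comm a, Real.rpow_add_natCast hx.1.ne', mul_right_comm]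
    _ = l ^ (a + b - 1 + n) * beta (a + n) b := by
        rw [setIntegral_rpow_mul_sub_rpow (by positivity) hb hl,
          show a + n + b - 1 = a + b - 1 + n by ring]
    _ = l ^ (a + b - 1) * beta a b * (rpoch a n / rpoch (a + b) n * l ^ n) := by
        rw [Real.rpow_add_natCast hl.ne',
          beta_add_natCast (ne_neg_natCast ha) (ne_neg_natCast (add_pos ha hb))]
        ring

end BetaWeight

theorem statement10_general {a b d z l : ℝ} (ha : 0 < a) (hb : 0 < b) (hl : 0 < l)
    (hzl : |z * l| < 1) :
    ∫ x in Set.Ioo 0 l, x ^ (a - 1) * (1 - z * x) ^ (-d) * (l - x) ^ (b - 1) =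
      l ^ (a + b - 1) * (Real.Gamma a * Real.Gamma b / Real.Gamma (a + b)) *
        hyp2F1 a d (a + b) (z * l) := by
  let c (n : ℕ) : ℝ := rpoch d n / n.factorial * z ^ n
  have norm_le : ∀ᵐ x ∂volume.restrict (Set.Ioo 0 l), ‖x‖ ≤ l :=
    ae_restrict_of_forall_mem measurableSet_Ioo fun x hx ↦ by
      simpa only [Real.norm_of_nonneg hx.1.le] using hx.2.le
  have summable_coeff : Summable fun n ↦ ‖c n‖ * l ^ n := by
    simpa [c, mul_pow, mul_assoc, abs_of_pos hl] using (hasSum_one_sub_rpow_neg d hzl).summable.norm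
  have tsum_coeff {x : ℝ} (hx : x ∈ Set.Ioo 0 l) : ∑' n, c n * x ^ n = (1 - z * x) ^ (-d) := by
    have hzx : |z * x| < 1 := by
      refine lt_of_le_of_lt ?_ hzl
      rw [abs_mul, abs_mul, abs_of_pos hx.1, abs_of_pos hl]
      exact mul_le_mul_of_nonneg_left hx.2.le (abs_nonneg z)
    simpa only [c, mul_pow, mul_assoc] using (hasSum_one_sub_rpow_neg d hzx).tsum_eq
  calc ∫ x in Set.Ioo 0 l, x ^ (a - 1) * (1 - z * x) ^ (-d) * (l - x) ^ (b - 1)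
      = ∫ x in Set.Ioo 0 l, x ^ (a - 1) * (l - x) ^ (b - 1) * ∑' n, c n * x ^ n :=
        setIntegral_congr_fun measurableSet_Ioo fun x hx ↦ by
          simp only [tsum_coeff hx, mul_right_comm]
    _ = ∑' n, c n * ∫ x in Set.Ioo 0 l, x ^ (a - 1) * (l - x) ^ (b - 1) * x ^ n :=
        (hasSum_integral_mul_powerSeries norm_le (integrableOn_rpow_mul_sub_rpow ha hb hl)
          summable_coeff).tsum_eq.symm
    _ = l ^ (a + b - 1) * beta a b * hyp2F1 a d (a + b) (z * l) := by
        rw [hyp2F1, ← tsum_mul_left]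
        refine tsum_congr fun n ↦ ?_
        rw [setIntegral_rpow_mul_sub_rpow_mul_pow ha hb hl]
        ring

/-- Period integral over `[0, λ]` of `dx/y` for the superelliptic curve
`y^{2r} = x^{3r−p−q}(x−1)^{p}(x−λ)^{p}`. -/
theorem statement10 (β₁ β₂ lam : ℝ) (hβ₂ : β₂ < 1) (hβ : 1 / 2 < β₁ + β₂)
    (hl0 : 0 < lam) (hl1 : lam < 1) :
    ∫ x in Set.Ioo 0 lam,
        x ^ (β₁ + β₂ - 3 / 2) * (1 - x) ^ (-β₂) * (lam - x) ^ (-β₂) =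
      lam ^ (β₁ - 1 / 2) *
        (Real.Gamma (β₁ + β₂ - 1 / 2) * Real.Gamma (1 - β₂) / Real.Gamma (β₁ + 1 / 2)) *
        hyp2F1 (β₁ + β₂ - 1 / 2) β₂ (β₁ + 1 / 2) lam := by
  have hab : β₁ + β₂ - 1 / 2 + (1 - β₂) = β₁ + 1 / 2 := by ring
  convert hab ▸ statement10_general (d := β₂) (z := 1) (sub_pos.2 hβ) (sub_pos.2 hβ₂) hl0
    (by rwa [one_mul, abs_of_pos hl0]) using 4 <;> ring_nf
end

section
/- (Generalized fibration 𝔍₅) Let r, p be positive integers with r/2 < p < 3r/2 and set q = 3r − 2p. Let Λ₁, Λ₂, ζ₁, ζ₂, η₁, η₂ be complex numbers with Λ₁ ≠ 0, Λ₁² ≠ 1, Λ₂² ≠ 1, ζ₁ ≠ 0, Λ₂²ζ₁ − ζ₂ ≠ 0, ζ₁ + (Λ₁²−1)ζ₂ − Λ₁² ≠ 0, satisfying η₁^{2r} = ζ₁^{2r−p}(ζ₁−1)^{2r−p}(ζ₁−Λ₁²)^{2r−p} and η₂^{2r} = ζ₂^{p}(ζ₂−1)^{p}(ζ₂−Λ₂²)^{p}.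 Define U = (ζ₁−ζ₂)(Λ₂²ζ₁+(Λ₁²−1)ζ₂−Λ₁²Λ₂²) / ((Λ₂²ζ₁−ζ₂)(ζ₁+(Λ₁²−1)ζ₂−Λ₁²)), R = Λ₁²(Λ₂²−1)(U−1)(U−1+Λ₁²(1−Λ₂²))((Λ₁²Λ₂²−Λ₁²−Λ₂²)U+Λ₂²), X = R(ζ₁−ζ₂)(ζ₁−Λ₁²) / (ζ₁(ζ₁+(Λ₁²−1)ζ₂−Λ₁²)), Y = R·Λ₁²(1−Λ₁²)(U−1)ζ₂(ζ₁−ζ₂)η₁η₂ / (ζ₁²(Λ₂²ζ₁−ζ₂)(ζ₁+(Λ₁²−1)ζ₂−Λ₁²)²). If moreover U ≠ 1 whenever p > r, then Y^{2r} = Λ₁^{−4p} (1−Λ₁²)^{2(r−p)} (1−Λ₂²)^{−2r} (U−1)^{4(r−p)} X^{2r−p} · (X + Λ₁²(Λ₂²−1)(U−1)((Λ₁²Λ₂²−1)U−Λ₁²+1)((Λ₁²Λ₂²−Λ₁²−Λ₂²)U+Λ₂²))^{p} · (X + Λ₁²(Λ₂²−1)U(U−1)(U−1+Λ₁²(1−Λ₂²))((1−Λ₁²)Λ₂²U+Λ₁²−Λ₂²))^{p},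 where powers with negative integer exponents denote the corresponding inverses in ℂ. -/
/-!
Writing `Y = C η₁ η₂` and `m = 2r - p`, the two curves give
`Y ^ (m + p) = (C f₁) ^ m (C f₂) ^ p`, where `f₁ = x (x - 1) (x - a)` and `f₂ = y (y - 1) (y - b)`
are the branch cubics. This separates the exponents `m` and `p`, so the fibration reduces to two
identities of rational functions in `x` and `y`: up to constants and powers of `U - 1`, the function
`C f₁` is `X` and `C f₂` is the product of the other two factors in the equation of the fibre. The
first identity follows from the factorization of `U - 1`, the second from the fact that both of
these factors are explicit multiples of `(U - 1) ^ 2`.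
-/

variable {K : Type*} [Field K]

/-- The base coordinate `U` of the fibration `𝔍₅`, with `a = Λ₁²`, `b = Λ₂²`, `x = ζ₁`,
`y = ζ₂`. -/
def kummerU (a b x y : K) : K :=
  (x - y) * (b * x + (a - 1) * y - a * b) / ((b * x - y) * (x + (a - 1) * y - a))

/-- The common factor `R` of the fibre coordinates `X` and `Y`, as a polynomial in the base
coordinate `u`. -/
def kummerR (a b u : K) : K :=
  a * (b - 1) * (u - 1) * (u - 1 + a * (1 - b)) * ((a * b - a - b) * u + b)

/-- The fibre coordinate `X` of the fibration `𝔍₅`. -/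
def kummerX (a b x y : K) : K :=
  kummerR a b (kummerU a b x y) * (x - y) * (x - a) / (x * (x + (a - 1) * y - a))

/-- The coefficient `C` in the fibre coordinate `Y = C η₁ η₂` of the fibration `𝔍₅`. -/
def kummerYCoeff (a b x y : K) : K :=
  kummerR a b (kummerU a b x y) * a * (1 - a) * (kummerU a b x y - 1) * y * (x - y) /
    (x ^ 2 * (b * x - y) * (x + (a - 1) * y - a) ^ 2)

/-- The fibre coordinate `Y` of the fibration `𝔍₅`. -/
def kummerY (a b x y η₁ η₂ : K) : K :=
  kummerR a b (kummerU a b x y) * a * (1 - a) * (kummerU a b x y - 1) * y * (x - y) * η₁ * η₂ /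
    (x ^ 2 * (b * x - y) * (x + (a - 1) * y - a) ^ 2)

/-- The negative of the first branch point other than `0` and `∞` of the fibre over `u`. -/
def kummerShift₁ (a b u : K) : K :=
  a * (b - 1) * (u - 1) * ((a * b - 1) * u - a + 1) * ((a * b - a - b) * u + b)

/-- The negative of the second branch point other than `0` and `∞` of the fibre over `u`. -/
def kummerShift₂ (a b u : K) : K :=
  a * (b - 1) * u * (u - 1) * (u - 1 + a * (1 - b)) * ((1 - a) * b * u + a - b)

section RationalIdentities

variable {a b x y : K}

lemma kummerY_eq_coeff_mul (η₁ η₂ : K) :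
    kummerY a b x y η₁ η₂ = kummerYCoeff a b x y * η₁ * η₂ := by
  rw [kummerY, kummerYCoeff, mul_div_right_comm, mul_div_right_comm]

lemma kummerU_sub_one (hD₁ : b * x - y ≠ 0) (hD₂ : x + (a - 1) * y - a ≠ 0) :
    kummerU a b x y - 1 =
      a * (1 - b) * y * (x - 1) / ((b * x - y) * (x + (a - 1) * y - a)) := by
  rw [kummerU, div_sub_one (mul_ne_zero hD₁ hD₂)]
  ring

lemma kummerX_add_shift₁ (hx : x ≠ 0) (hD₁ : b * x - y ≠ 0) (hD₂ : x + (a - 1) * y - a ≠ 0) :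
    kummerX a b x y + kummerShift₁ a b (kummerU a b x y) =
      a ^ 2 * (a - 1) * (b - 1) * (kummerU a b x y - 1) ^ 2 *
        ((a * b - a - b) * kummerU a b x y + b) * y * (y - 1) / (x * (x + (a - 1) * y - a)) := by
  have hfactor : (kummerU a b x y - 1 + a * (1 - b)) * ((x - y) * (x - a)) +
      ((a * b - 1) * kummerU a b x y - a + 1) * (x * (x + (a - 1) * y - a)) =
        a * (a - 1) * (kummerU a b x y - 1) * y * (y - 1) := by
    rw [kummerU]
    generalize hD₁_eq : b * x - y = D₁ at *
    generalize hD₂_eq : x + (a - 1) * y - a = D₂ at *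
    field_simp
    subst hD₁_eq hD₂_eq
    ring
  rw [kummerX, kummerR, kummerShift₁]
  generalize kummerU a b x y = u at *
  generalize x + (a - 1) * y - a = D₂ at *
  field_simp
  linear_combination a * (b - 1) * (u - 1) * ((a * b - a - b) * u + b) * hfactor

lemma kummerX_add_shift₂ (hx : x ≠ 0) (hD₁ : b * x - y ≠ 0) (hD₂ : x + (a - 1) * y - a ≠ 0) :
    kummerX a b x y + kummerShift₂ a b (kummerU a b x y) =
      a ^ 2 * (1 - a) * (b - 1) * (kummerU a b x y - 1) ^ 2 *
        (kummerU a b x y - 1 + a * (1 - b)) * y * (x - y) * (y - b) /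
          (x * (b * x - y) * (x + (a - 1) * y - a)) := by
  have hfactor : ((a * b - a - b) * kummerU a b x y + b) * ((x - y) * (x - a)) * (b * x - y) +
      kummerU a b x y * ((1 - a) * b * kummerU a b x y + a - b) *
        (x * (b * x - y) * (x + (a - 1) * y - a)) =
          a * (1 - a) * (kummerU a b x y - 1) * y * (x - y) * (y - b) := by
    rw [kummerU]
    generalize hD₁_eq : b * x - y = D₁ at *
    generalize hD₂_eq : x + (a - 1) * y - a = D₂ at *
    field_simp
    subst hD₁_eq hD₂_eq
    ring
  rw [kummerX, kummerR, kummerShift₂]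
  generalize kummerU a b x y = u at *
  generalize b * x - y = D₁ at *
  generalize x + (a - 1) * y - a = D₂ at *
  field_simp
  linear_combination a * (b - 1) * (u - 1) * (u - 1 + a * (1 - b)) * hfactor

lemma kummerYCoeff_mul_cubic₁ (hx : x ≠ 0) (hD₁ : b * x - y ≠ 0)
    (hD₂ : x + (a - 1) * y - a ≠ 0) :
    (1 - b) * (kummerYCoeff a b x y * (x * (x - 1) * (x - a))) =
      (1 - a) * (kummerU a b x y - 1) ^ 2 * kummerX a b x y := by
  calc
    _ = (1 - a) * (kummerU a b x y - 1) *
          (a * (1 - b) * y * (x - 1) / ((b * x - y) * (x + (a - 1) * y - a))) *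
            kummerX a b x y := by
      rw [kummerYCoeff, kummerX]
      generalize kummerU a b x y = u
      generalize b * x - y = D₁ at *
      generalize x + (a - 1) * y - a = D₂ at *
      field_simp
    _ = (1 - a) * (kummerU a b x y - 1) ^ 2 * kummerX a b x y := by
      rw [← kummerU_sub_one hD₁ hD₂]
      ring

lemma kummerYCoeff_mul_cubic₂ (hx : x ≠ 0) (hD₁ : b * x - y ≠ 0)
    (hD₂ : x + (a - 1) * y - a ≠ 0) :
    a ^ 2 * (1 - a) * (1 - b) * (kummerU a b x y - 1) ^ 2 *
        (kummerYCoeff a b x y * (y * (y - 1) * (y - b))) =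
      (kummerX a b x y + kummerShift₁ a b (kummerU a b x y)) *
        (kummerX a b x y + kummerShift₂ a b (kummerU a b x y)) := by
  rw [kummerX_add_shift₁ hx hD₁ hD₂, kummerX_add_shift₂ hx hD₁ hD₂, kummerYCoeff, kummerR]
  generalize kummerU a b x y = u
  generalize b * x - y = D₁ at *
  generalize x + (a - 1) * y - a = D₂ at *
  field_simp
  ring

end RationalIdentities

lemma mul_mul_pow_of_pow_eq {M : Type*} [CommMonoid M] {m p : ℕ} {η₁ η₂ f₁ f₂ : M}
    (h₁ : η₁ ^ (m + p) = f₁ ^ m) (h₂ : η₂ ^ (m + p) = f₂ ^ p) (c : M) :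
    (c * η₁ * η₂) ^ (m + p) = (c * f₁) ^ m * (c * f₂) ^ p := by
  rw [mul_pow, mul_pow, h₁, h₂, pow_add, mul_pow, mul_pow]
  ac_rfl

/-- The constants of the fibration arise for `A = 1 - a`, `B = 1 - b` and `w = U - 1`. -/
lemma pow_mul_pow_eq_zpow_mul {G₀ : Type*} [CommGroupWithZero G₀] {r p : ℕ}
    (hp : p ≤ 2 * r) {A w : G₀} (hA : A ≠ 0) (hw : w ≠ 0) (a B X E F : G₀) :
    (A * w ^ 2 * X / B) ^ (2 * r - p) * (E * F / (a ^ 2 * A * B * w ^ 2)) ^ p =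
      a ^ (-(2 * (p : ℤ))) * A ^ (2 * ((r : ℤ) - p)) * B ^ (-(2 * (r : ℤ))) *
        w ^ (4 * ((r : ℤ) - p)) * X ^ (2 * r - p) * E ^ p * F ^ p := by
  obtain ⟨m, hm⟩ : ∃ m, 2 * r = m + p := ⟨2 * r - p, by lia⟩
  have hmp : 2 * (r : ℤ) = m + p := mod_cast hm
  have ha_pow : a ^ (-(2 * (p : ℤ))) = ((a ^ 2) ^ p)⁻¹ := by
    rw [zpow_neg, ← pow_mul]
    norm_cast
  have hA_pow : A ^ (2 * ((r : ℤ) - p)) = A ^ m * (A ^ p)⁻¹ := by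
    rw [show 2 * ((r : ℤ) - p) = m - p by lia, zpow_sub₀ hA, zpow_natCast, zpow_natCast,
      div_eq_mul_inv]
  have hB_pow : B ^ (-(2 * (r : ℤ))) = (B ^ m)⁻¹ * (B ^ p)⁻¹ := by
    rw [zpow_neg, ← mul_inv, ← pow_add, ← hm]
    norm_cast
  have hw_pow : w ^ (4 * ((r : ℤ) - p)) = (w ^ 2) ^ m * ((w ^ 2) ^ p)⁻¹ := by
    rw [show 4 * ((r : ℤ) - p) = 2 * (m - p) by lia, zpow_mul, zpow_sub₀ (zpow_ne_zero 2 hw),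
      ← div_eq_mul_inv]
    norm_cast
  rw [ha_pow, hA_pow, hB_pow, hw_pow, show 2 * r - p = m by lia]
  simp only [div_eq_mul_inv, mul_inv, mul_pow, inv_pow]
  ac_rfl

theorem statement13_general {r p : ℕ} (hr : 0 < r) (hp : p ≤ 2 * r) {a b x y η₁ η₂ : K}
    (ha₀ : a ≠ 0) (ha₁ : a ≠ 1) (hb₁ : b ≠ 1) (hx : x ≠ 0) (hD₁ : b * x - y ≠ 0)
    (hD₂ : x + (a - 1) * y - a ≠ 0)
    (hcurve₁ : η₁ ^ (2 * r) = (x * (x - 1) * (x - a)) ^ (2 * r - p))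
    (hcurve₂ : η₂ ^ (2 * r) = (y * (y - 1) * (y - b)) ^ p)
    (hU : r < p → kummerU a b x y ≠ 1) :
    kummerY a b x y η₁ η₂ ^ (2 * r) =
      a ^ (-(2 * (p : ℤ))) * (1 - a) ^ (2 * ((r : ℤ) - p)) * (1 - b) ^ (-(2 * (r : ℤ))) *
        (kummerU a b x y - 1) ^ (4 * ((r : ℤ) - p)) * kummerX a b x y ^ (2 * r - p) *
        (kummerX a b x y + kummerShift₁ a b (kummerU a b x y)) ^ p *
        (kummerX a b x y + kummerShift₂ a b (kummerU a b x y)) ^ p := by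
  rcases eq_or_ne (kummerU a b x y) 1 with hU₁ | hU₁
  · have hpr : p ≤ r := not_lt.mp fun h ↦ hU h hU₁
    have hm : 2 * r - p ≠ 0 := Nat.sub_ne_zero_of_lt (hpr.trans_lt (by lia))
    have hR : kummerR a b (kummerU a b x y) = 0 := by simp [kummerR, hU₁]
    have hX : kummerX a b x y = 0 := by simp [kummerX, hR]
    have hY : kummerY a b x y η₁ η₂ = 0 := by simp [kummerY, hR]
    simp [hX, hY, hr.ne', hm]
  have ha : 1 - a ≠ 0 := sub_ne_zero.mpr ha₁.symm
  have hb : 1 - b ≠ 0 := sub_ne_zero.mpr hb₁.symm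
  have hw : kummerU a b x y - 1 ≠ 0 := sub_ne_zero.mpr hU₁
  have hsum : 2 * r - p + p = 2 * r := Nat.sub_add_cancel hp
  rw [kummerY_eq_coeff_mul, ← pow_mul_pow_eq_zpow_mul hp ha hw,
    ← kummerYCoeff_mul_cubic₁ hx hD₁ hD₂, ← kummerYCoeff_mul_cubic₂ hx hD₁ hD₂,
    mul_div_cancel_left₀ _ hb, mul_div_cancel_left₀ _ (by simp [ha₀, ha, hb, hw])]
  simpa only [hsum] using mul_mul_pow_of_pow_eq (m := 2 * r - p) (p := p)
    (by rw [hsum, hcurve₁]) (by rw [hsum, hcurve₂]) (kummerYCoeff a b x y)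

/-- Generalized fibration `𝔍₅` on the generalized Kummer variety
`S₀^{(r,p,q=3r−2p)}(Λ₁², Λ₂²)`. -/
theorem statement13 (r p q : ℕ) (hr : 0 < r) (hp0 : 0 < p)
    (hp1 : r < 2 * p) (hp2 : 2 * p < 3 * r) (hq : q = 3 * r - 2 * p)
    (Λ₁ Λ₂ ζ₁ ζ₂ η₁ η₂ : ℂ)
    (hΛ₁0 : Λ₁ ≠ 0) (hΛ₁1 : Λ₁ ^ 2 ≠ 1) (hΛ₂1 : Λ₂ ^ 2 ≠ 1)
    (hζ₁0 : ζ₁ ≠ 0) (hden1 : Λ₂ ^ 2 * ζ₁ - ζ₂ ≠ 0)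
    (hden2 : ζ₁ + (Λ₁ ^ 2 - 1) * ζ₂ - Λ₁ ^ 2 ≠ 0)
    (hcurve1 : η₁ ^ (2 * r) =
      ζ₁ ^ (2 * r - p) * (ζ₁ - 1) ^ (2 * r - p) * (ζ₁ - Λ₁ ^ 2) ^ (2 * r - p))
    (hcurve2 : η₂ ^ (2 * r) =
      ζ₂ ^ p * (ζ₂ - 1) ^ p * (ζ₂ - Λ₂ ^ 2) ^ p)
    (U R X Y : ℂ)
    (hU : U = (ζ₁ - ζ₂) * (Λ₂ ^ 2 * ζ₁ + (Λ₁ ^ 2 - 1) * ζ₂ - Λ₁ ^ 2 * Λ₂ ^ 2) /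
      ((Λ₂ ^ 2 * ζ₁ - ζ₂) * (ζ₁ + (Λ₁ ^ 2 - 1) * ζ₂ - Λ₁ ^ 2)))
    (hR : R = Λ₁ ^ 2 * (Λ₂ ^ 2 - 1) * (U - 1) * (U - 1 + Λ₁ ^ 2 * (1 - Λ₂ ^ 2)) *
      ((Λ₁ ^ 2 * Λ₂ ^ 2 - Λ₁ ^ 2 - Λ₂ ^ 2) * U + Λ₂ ^ 2))
    (hX : X = R * (ζ₁ - ζ₂) * (ζ₁ - Λ₁ ^ 2) /
      (ζ₁ * (ζ₁ + (Λ₁ ^ 2 - 1) * ζ₂ - Λ₁ ^ 2)))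
    (hY : Y = R * Λ₁ ^ 2 * (1 - Λ₁ ^ 2) * (U - 1) * ζ₂ * (ζ₁ - ζ₂) * η₁ * η₂ /
      (ζ₁ ^ 2 * (Λ₂ ^ 2 * ζ₁ - ζ₂) * (ζ₁ + (Λ₁ ^ 2 - 1) * ζ₂ - Λ₁ ^ 2) ^ 2))
    (hU1 : r < p → U ≠ 1) :
    Y ^ (2 * r) =
      Λ₁ ^ (-(4 * (p : ℤ))) * (1 - Λ₁ ^ 2) ^ (2 * ((r : ℤ) - (p : ℤ))) *
      (1 - Λ₂ ^ 2) ^ (-(2 * (r : ℤ))) * (U - 1) ^ (4 * ((r : ℤ) - (p : ℤ))) *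
      X ^ (2 * r - p) *
      (X + Λ₁ ^ 2 * (Λ₂ ^ 2 - 1) * (U - 1) * ((Λ₁ ^ 2 * Λ₂ ^ 2 - 1) * U - Λ₁ ^ 2 + 1) *
        ((Λ₁ ^ 2 * Λ₂ ^ 2 - Λ₁ ^ 2 - Λ₂ ^ 2) * U + Λ₂ ^ 2)) ^ p *
      (X + Λ₁ ^ 2 * (Λ₂ ^ 2 - 1) * U * (U - 1) * (U - 1 + Λ₁ ^ 2 * (1 - Λ₂ ^ 2)) *
        ((1 - Λ₁ ^ 2) * Λ₂ ^ 2 * U + Λ₁ ^ 2 - Λ₂ ^ 2)) ^ p := by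
  obtain rfl : U = kummerU (Λ₁ ^ 2) (Λ₂ ^ 2) ζ₁ ζ₂ := hU
  obtain rfl : R = kummerR (Λ₁ ^ 2) (Λ₂ ^ 2) _ := hR
  obtain rfl : X = kummerX (Λ₁ ^ 2) (Λ₂ ^ 2) ζ₁ ζ₂ := hX
  obtain rfl : Y = kummerY (Λ₁ ^ 2) (Λ₂ ^ 2) ζ₁ ζ₂ η₁ η₂ := hY
  have hΛ₁_zpow : Λ₁ ^ (-(4 * (p : ℤ))) = (Λ₁ ^ 2) ^ (-(2 * (p : ℤ))) := by
    rw [← zpow_natCast, ← zpow_mul]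
    ring_nf
  rw [hΛ₁_zpow]
  exact statement13_general hr (by lia) (pow_ne_zero 2 hΛ₁0) hΛ₁1 hΛ₂1 hζ₁0 hden1 hden2
    (by simpa only [mul_pow] using hcurve1) (by simpa only [mul_pow] using hcurve2) hU1
end
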